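/- Let d ≥ 4 and let X be a finite set in Euclidean d-space with all pairwise distances at most 1. Then there do not exist two d-element subsets K₁, K₂ of X, each having all pairwise distances within it equal to 1, such that the intersection K₁ ∩ K₂ has exactly d − 3 elements. -/

import Mathlib

attribute [local instance] Classical.propDecidable

/-!
Let `A = K₁ ∩ K₂`, `B = K₁ \ K₂`, `C = K₂ \ K₁`, and let `N s t = 1 - ‖s - t‖ ^ 2` for `s ∈ B`,
`t ∈ C`, so that `0 ≤ N < 1` entrywise. Pairing an affine relation `z` between the points of
`K₁ ∪ K₂` with the numbers `1 - ‖v - u‖ ^ 2` gives a linear system: with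
`c = ∑ u, z u * ‖u‖ ^ 2`, `p = z|B` and `q = z|C`, it says `z = -c` on `A`, `p + N q = -c` and
`q + Nᵀ p = -c`.

Since `#(K₁ ∪ K₂) ≥ finrank + 3`, one more linear condition can be imposed on `z ≠ 0`. Imposing
`c = 0` makes `(p, -q)` a pair of singular vectors of `N` for the singular value `1` with equal
coordinate sums. As `B` and `C` have three points, comparing positive and negative parts shows that
such a pair has constant sign. It then plays the role of a Perron vector: the Schur test shows that
`[1, N; Nᵀ, 1]` is positive semidefinite. Imposing `∑ p = 0` instead gives another `z ≠ 0`, on which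
that quadratic form is `-#A * c ^ 2 ≤ 0`. Hence `(p, q)` lies in the kernel, so `c = 0`, and a
constant-sign `p` with zero sum vanishes, which forces `z = 0`.
-/

open Finset Matrix Module

section SchurTest

variable {ι κ : Type*} [Fintype ι] [Fintype κ] {N : Matrix ι κ ℝ} {u : ι → ℝ} {v : κ → ℝ}

/-- The symmetric block matrix `[1, N; Nᵀ, 1]`. It is positive semidefinite exactly when `N` is a
contraction for the Euclidean norms. -/
def unitBlock [DecidableEq ι] [DecidableEq κ] (N : Matrix ι κ ℝ) : Matrix (ι ⊕ κ) (ι ⊕ κ) ℝ :=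
  fromBlocks 1 N Nᵀ 1

theorem unitBlock_mulVec_sumElim [DecidableEq ι] [DecidableEq κ] (N : Matrix ι κ ℝ) (p : ι → ℝ)
    (q : κ → ℝ) :
    unitBlock N *ᵥ Sum.elim p q = Sum.elim (p + N *ᵥ q) (q + Nᵀ *ᵥ p) := by
  rw [unitBlock, fromBlocks_mulVec, Sum.elim_comp_inl, Sum.elim_comp_inr, one_mulVec, one_mulVec,
    add_comm q]

theorem dotProduct_unitBlock_mulVec [DecidableEq ι] [DecidableEq κ] (N : Matrix ι κ ℝ) (p : ι → ℝ)
    (q : κ → ℝ) :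
    Sum.elim p q ⬝ᵥ unitBlock N *ᵥ Sum.elim p q = p ⬝ᵥ p + q ⬝ᵥ q + 2 * (p ⬝ᵥ N *ᵥ q) := by
  have hcross : q ⬝ᵥ Nᵀ *ᵥ p = p ⬝ᵥ N *ᵥ q := by
    rw [mulVec_transpose, dotProduct_comm, dotProduct_mulVec]
  rw [unitBlock_mulVec_sumElim, sumElim_dotProduct_sumElim, dotProduct_add, dotProduct_add, hcross]
  ring

theorem sum_sum_mul_div_le (hu : ∀ i, 0 < u i) (hNv : N *ᵥ v ≤ u) (p : ι → ℝ) :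
    ∑ i, ∑ j, N i j * v j * (p i ^ 2 / u i) ≤ p ⬝ᵥ p := by
  refine sum_le_sum fun i _ ↦ ?_
  calc ∑ j, N i j * v j * (p i ^ 2 / u i) = (N *ᵥ v) i * (p i ^ 2 / u i) := (sum_mul ..).symm
    _ ≤ u i * (p i ^ 2 / u i) :=
      mul_le_mul_of_nonneg_right (hNv i) (div_nonneg (sq_nonneg _) (hu i).le)
    _ = p i * p i := by rw [mul_div_cancel₀ _ (hu i).ne', sq]

-- The Schur test: with weights `u`, `v` the quadratic form dominates a sum of squares of
-- `v j * p i + u i * q j`.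
theorem posSemidef_unitBlock_of_mulVec_le [DecidableEq ι] [DecidableEq κ]
    (hN : ∀ i j, 0 ≤ N i j) (hu : ∀ i, 0 < u i) (hv : ∀ j, 0 < v j) (hNv : N *ᵥ v ≤ u)
    (hNu : Nᵀ *ᵥ u ≤ v) : (unitBlock N).PosSemidef := by
  refine .of_dotProduct_mulVec_nonneg
    (.fromBlocks isHermitian_one (conjTranspose_eq_transpose_of_trivial N) isHermitian_one)
    fun z ↦ ?_
  rw [star_trivial, ← Sum.elim_comp_inl_inr z, dotProduct_unitBlock_mulVec]
  set p := z ∘ Sum.inl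
  set q := z ∘ Sum.inr
  have hp := sum_sum_mul_div_le hu hNv p
  have hq := sum_sum_mul_div_le hv hNu q
  rw [sum_comm] at hq
  have hsquare (i : ι) (j : κ) :
      0 ≤ N i j * v j * (p i ^ 2 / u i) + N i j * u i * (q j ^ 2 / v j) +
        2 * (p i * (N i j * q j)) := by
    have hui := hu i
    have hvj := hv j
    have hNij := hN i j
    calc (0 : ℝ) ≤ N i j * (v j * p i + u i * q j) ^ 2 / (u i * v j) := by positivity
      _ = _ := by field_simp; ring
  have hsum := sum_nonneg fun i (_ : i ∈ univ) ↦ sum_nonneg fun j (_ : j ∈ univ) ↦ hsquare i j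
  simp only [sum_add_distrib, ← mul_sum] at hsum
  simp only [transpose_apply] at hq
  exact hsum.trans (add_le_add_left (add_le_add hp hq) _)

end SchurTest

theorem existsUnique_pos_or_existsUnique_neg {ι : Type*} [Fintype ι] {x : ι → ℝ}
    (hι : Fintype.card ι ≤ 3) (hpos : ∃ i, 0 < x i) (hneg : ∃ i, x i < 0) :
    (∃! i, 0 < x i) ∨ ∃! i, x i < 0 := by
  have hdisj : Disjoint ({i | 0 < x i} : Finset ι) ({i | x i < 0} : Finset ι) :=
    disjoint_filter.2 fun _ _ h ↦ h.le.not_gt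
  have hcard := (card_union_of_disjoint hdisj).symm.trans_le (card_le_univ _)
  have hunique {P : ι → Prop} (hex : ∃ i, P i) (hle : #{i | P i} ≤ 1) : ∃! i, P i := by
    obtain ⟨i, hi⟩ := hex
    exact ⟨i, hi, fun j hj ↦ card_le_one.1 hle j (by simpa) i (by simpa)⟩
  rcases le_or_gt #{i | 0 < x i} 1 with hle | hlt
  · exact .inl (hunique hpos hle)
  · exact .inr (hunique hneg (by omega))

/-- Singular vectors of `N` for the singular value `1` with equal coordinate sums. The kernel of
`[1, N; Nᵀ, 1]` inside the sum-zero hyperplane consists of the vectors `(x, -y)`. -/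
structure IsBalancedPair {ι κ : Type*} [Fintype ι] [Fintype κ] (N : Matrix ι κ ℝ) (x : ι → ℝ)
    (y : κ → ℝ) : Prop where
  mulVec_eq : N *ᵥ y = x
  transpose_mulVec_eq : Nᵀ *ᵥ x = y
  sum_eq_sum : ∑ i, x i = ∑ j, y j

/-- The vector obtained from `x` by replacing each zero coordinate by `1`; for `0 ≤ x` this is a
strictly positive weight for the Schur test. -/
noncomputable def padZeros {ι : Type*} (x : ι → ℝ) : ι → ℝ :=
  x + {i | x i = 0}.indicator 1

theorem padZeros_pos {ι : Type*} {x : ι → ℝ} (hx : 0 ≤ x) (i : ι) : 0 < padZeros x i := by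
  by_cases hi : x i = 0
  · simp [padZeros, hi]
  · simpa [padZeros, hi] using (hx i).lt_of_ne' hi

namespace IsBalancedPair

variable {ι κ : Type*} [Fintype ι] [Fintype κ] {N : Matrix ι κ ℝ} {x : ι → ℝ} {y : κ → ℝ}

theorem symm (h : IsBalancedPair N x y) : IsBalancedPair Nᵀ y x :=
  ⟨h.transpose_mulVec_eq, h.mulVec_eq, h.sum_eq_sum.symm⟩

theorem neg (h : IsBalancedPair N x y) : IsBalancedPair N (-x) (-y) where
  mulVec_eq := by rw [mulVec_neg, h.mulVec_eq]
  transpose_mulVec_eq := by rw [mulVec_neg, h.transpose_mulVec_eq]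
  sum_eq_sum := by simp [h.sum_eq_sum]

theorem apply_eq_sum (h : IsBalancedPair N x y) (i : ι) : x i = ∑ j, N i j * y j :=
  (congrFun h.mulVec_eq i).symm

theorem nonneg_right (h : IsBalancedPair N x y) (hN : ∀ i j, 0 ≤ N i j) (hx : 0 ≤ x) : 0 ≤ y :=
  fun j ↦ (sum_nonneg fun i _ ↦ mul_nonneg (hN i j) (hx i)).trans_eq (h.symm.apply_eq_sum j).symm

theorem exists_pos_right (h : IsBalancedPair N x y) (hN : ∀ i j, 0 ≤ N i j)
    (hpos : ∃ i, 0 < x i) : ∃ j, 0 < y j := by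
  obtain ⟨i, hi⟩ := hpos
  by_contra! hy
  refine hi.not_ge ((h.apply_eq_sum i).trans_le ?_)
  exact sum_nonpos fun j _ ↦ mul_nonpos_of_nonneg_of_nonpos (hN i j) (hy j)

theorem sum_posPart_lt_of_existsUnique_pos (h : IsBalancedPair N x y) (hN : ∀ i j, 0 ≤ N i j)
    (hN1 : ∀ i j, N i j < 1) (hx : ∃! i, 0 < x i) : ∑ i, (x i)⁺ < ∑ j, (y j)⁺ := by
  obtain ⟨i, hi, huniq⟩ := hx
  obtain ⟨j₀, hj₀⟩ := h.exists_pos_right hN ⟨i, hi⟩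
  have hle (j : κ) : N i j * y j ≤ N i j * (y j)⁺ :=
    mul_le_mul_of_nonneg_left (le_posPart _) (hN i j)
  calc ∑ k, (x k)⁺ = (x i)⁺ :=
        Fintype.sum_eq_single i fun k hk ↦
          posPart_eq_zero.2 (not_lt.1 fun hpos ↦ hk (huniq k hpos))
    _ = ∑ j, N i j * y j := by rw [posPart_eq_self.2 hi.le, h.apply_eq_sum i]
    _ ≤ ∑ j, N i j * (y j)⁺ := sum_le_sum fun j _ ↦ hle j
    _ < ∑ j, (y j)⁺ :=
        sum_lt_sum (fun j _ ↦ mul_le_of_le_one_left (posPart_nonneg _) (hN1 i j).le)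
          ⟨j₀, mem_univ _, mul_lt_of_lt_one_left (posPart_pos hj₀) (hN1 i j₀)⟩

-- Both sums change by the same amount when positive parts are replaced by negative parts.
theorem sum_posPart_lt (h : IsBalancedPair N x y) (hN : ∀ i j, 0 ≤ N i j)
    (hN1 : ∀ i j, N i j < 1) (hx : (∃! i, 0 < x i) ∨ ∃! i, x i < 0) :
    ∑ i, (x i)⁺ < ∑ j, (y j)⁺ := by
  rcases hx with hx | hx
  · exact h.sum_posPart_lt_of_existsUnique_pos hN hN1 hx
  · have hneg : ∑ i, (x i)⁻ < ∑ j, (y j)⁻ := by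
      simpa using h.neg.sum_posPart_lt_of_existsUnique_pos hN hN1 (by simpa using hx)
    have hsum : ∑ i, (x i)⁺ - ∑ i, (x i)⁻ = ∑ j, (y j)⁺ - ∑ j, (y j)⁻ := by
      simpa only [← sum_sub_distrib, posPart_sub_negPart] using h.sum_eq_sum
    linarith

theorem nonneg_or_nonpos (h : IsBalancedPair N x y) (hN : ∀ i j, 0 ≤ N i j)
    (hN1 : ∀ i j, N i j < 1) (hι : Fintype.card ι ≤ 3) (hκ : Fintype.card κ ≤ 3) :
    0 ≤ x ∨ x ≤ 0 := by
  by_contra! hx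
  obtain ⟨hneg, hpos⟩ : (∃ i, x i < 0) ∧ ∃ i, 0 < x i := by
    simpa [Pi.le_def] using hx
  have hpos' := h.exists_pos_right hN hpos
  have hneg' : ∃ j, y j < 0 := by
    simpa using h.neg.exists_pos_right hN (by simpa using hneg)
  exact lt_asymm
    (h.sum_posPart_lt hN hN1 (existsUnique_pos_or_existsUnique_neg hι hpos hneg))
    (h.symm.sum_posPart_lt (fun j i ↦ hN i j) (fun j i ↦ hN1 i j)
      (existsUnique_pos_or_existsUnique_neg hκ hpos' hneg'))

theorem eq_zero_of_sum_eq_zero (h : IsBalancedPair N x y) (hN : ∀ i j, 0 ≤ N i j)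
    (hN1 : ∀ i j, N i j < 1) (hι : Fintype.card ι ≤ 3) (hκ : Fintype.card κ ≤ 3)
    (hsum : ∑ i, x i = 0) : x = 0 := by
  rcases h.nonneg_or_nonpos hN hN1 hι hκ with hx | hx
  · exact (Fintype.sum_eq_zero_iff_of_nonneg hx).1 hsum
  · exact (Fintype.sum_eq_zero_iff_of_nonpos hx).1 hsum

theorem card_zeros_le_one (h : IsBalancedPair N x y) (hN : ∀ i j, 0 ≤ N i j)
    (hN1 : ∀ i j, N i j < 1) (hκ : Fintype.card κ ≤ 3) (hx : 0 ≤ x) (hx0 : x ≠ 0) :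
    #{j | y j = 0} ≤ 1 := by
  have hy := h.nonneg_right hN hx
  have hpos : ∃ j, 0 < y j := h.exists_pos_right hN (Pi.lt_def.1 (hx.lt_of_ne' hx0)).2
  have hunique : ¬ ∃! j, 0 < y j := fun huniq ↦ by
    have hlt := h.symm.sum_posPart_lt (fun j i ↦ hN i j) (fun j i ↦ hN1 i j) (.inl huniq)
    simp only [posPart_eq_self.2 (hx _), posPart_eq_self.2 (hy _)] at hlt
    exact hlt.ne h.sum_eq_sum.symm
  have htwo : 1 < #{j | 0 < y j} := by
    obtain ⟨j, hj⟩ := hpos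
    by_contra! hle
    exact hunique ⟨j, hj, fun k hk ↦ card_le_one.1 hle k (by simpa) j (by simpa)⟩
  have hzero (j : κ) : y j = 0 ↔ ¬ 0 < y j :=
    ⟨fun hj ↦ hj.not_gt, fun hj ↦ (not_lt.1 hj).antisymm (hy j)⟩
  have hcompl : #{j | 0 < y j} + #{j | y j = 0} = Fintype.card κ := by
    simp only [hzero, card_filter_add_card_filter_not, card_univ]
  omega

theorem mulVec_padZeros_le (h : IsBalancedPair N x y) (hN : ∀ i j, 0 ≤ N i j)
    (hN1 : ∀ i j, N i j < 1) (hκ : Fintype.card κ ≤ 3) (hx : 0 ≤ x) (hx0 : x ≠ 0) :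
    N *ᵥ padZeros y ≤ padZeros x := by
  rw [padZeros, mulVec_add, h.mulVec_eq]
  refine add_le_add_right (fun i ↦ ?_) x
  have hzeros : (N *ᵥ {j | y j = 0}.indicator 1) i = ∑ j with y j = 0, N i j := by
    simp [mulVec, dotProduct, Set.indicator_apply, sum_filter]
  rw [hzeros]
  by_cases hi : x i = 0
  · calc ∑ j with y j = 0, N i j ≤ #{j | y j = 0} • (1 : ℝ) :=
          sum_le_card_nsmul _ _ _ fun j _ ↦ (hN1 i j).le
      _ ≤ 1 := by simpa using h.card_zeros_le_one hN hN1 hκ hx hx0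
      _ = _ := by simp [hi]
  · have hvanish (j : κ) (hj : y j = 0) : N i j = 0 := by
      have hterms := (sum_eq_zero_iff_of_nonneg fun k _ ↦ mul_nonneg (hN k j) (hx k)).1
        ((h.symm.apply_eq_sum j).symm.trans hj)
      exact (mul_eq_zero.1 (hterms i (mem_univ i))).resolve_right hi
    simp only [Set.indicator_apply, Set.mem_ofPred_eq, hi, if_false]
    exact (sum_eq_zero fun j hj ↦ hvanish j (mem_filter.1 hj).2).le

theorem posSemidef_of_nonneg [DecidableEq ι] [DecidableEq κ] (h : IsBalancedPair N x y)
    (hN : ∀ i j, 0 ≤ N i j) (hN1 : ∀ i j, N i j < 1) (hι : Fintype.card ι ≤ 3)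
    (hκ : Fintype.card κ ≤ 3) (hx : 0 ≤ x) (hx0 : x ≠ 0) :
    (unitBlock N).PosSemidef := by
  have hy := h.nonneg_right hN hx
  have hy0 : y ≠ 0 := fun hy ↦ hx0 (by rw [← h.mulVec_eq, hy, mulVec_zero])
  exact posSemidef_unitBlock_of_mulVec_le hN (padZeros_pos hx) (padZeros_pos hy)
    (h.mulVec_padZeros_le hN hN1 hκ hx hx0)
    (h.symm.mulVec_padZeros_le (fun j i ↦ hN i j) (fun j i ↦ hN1 i j) hι hy hy0)

theorem posSemidef [DecidableEq ι] [DecidableEq κ] (h : IsBalancedPair N x y)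
    (hN : ∀ i j, 0 ≤ N i j) (hN1 : ∀ i j, N i j < 1) (hι : Fintype.card ι ≤ 3)
    (hκ : Fintype.card κ ≤ 3) (hx0 : x ≠ 0) : (unitBlock N).PosSemidef := by
  rcases h.nonneg_or_nonpos hN hN1 hι hκ with hx | hx
  · exact h.posSemidef_of_nonneg hN hN1 hι hκ hx hx0
  · exact h.neg.posSemidef_of_nonneg hN hN1 hι hκ (neg_nonneg.2 hx) (neg_ne_zero.2 hx0)

end IsBalancedPair

section AffineRelation

variable {V : Type*} [AddCommGroup V] [Module ℝ V]

/-- A linear relation with coefficient sum zero between the points of `U`; only the values of `z`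
on `U` matter. -/
structure IsAffineRelation (U : Finset V) (z : V → ℝ) : Prop where
  sum_eq_zero : ∑ u ∈ U, z u = 0
  sum_smul_eq_zero : ∑ u ∈ U, z u • u = 0

theorem exists_isAffineRelation_sum_mul_eq_zero [Module.Finite ℝ V] {U : Finset V}
    (hU : finrank ℝ V + 2 < #U) (φ : V → ℝ) :
    ∃ z, IsAffineRelation U z ∧ ∑ u ∈ U, z u * φ u = 0 ∧ ∃ u ∈ U, z u ≠ 0 := by
  obtain ⟨g, hg⟩ : ∃ g : V ↪ V × ℝ, ∀ u, g u = (u, φ u) :=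
    ⟨⟨fun u ↦ (u, φ u), fun _ _ h ↦ congrArg Prod.fst h⟩, fun _ ↦ rfl⟩
  have hcard : finrank ℝ (V × ℝ) + 1 < #(U.map g) := by
    rwa [card_map, finrank_prod, finrank_self]
  obtain ⟨f, hsmul, hsum, x, hx, hfx⟩ :=
    exists_nontrivial_relation_sum_zero_of_finrank_succ_lt_card hcard
  obtain ⟨u, hu, rfl⟩ := mem_map.1 hx
  rw [sum_map] at hsmul hsum
  refine ⟨f ∘ g, ⟨hsum, ?_⟩, ?_, u, hu, hfx⟩
  · simpa [hg, Prod.fst_sum] using congrArg Prod.fst hsmul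
  · simpa [hg, Prod.snd_sum] using congrArg Prod.snd hsmul

end AffineRelation

section Geometry

variable {E : Type*} [NormedAddCommGroup E]

/-- A finite set whose points are pairwise at distance `1`. -/
def IsUnitClique (K : Finset E) : Prop :=
  ∀ x ∈ K, ∀ y ∈ K, x ≠ y → ‖x - y‖ = 1

/-- The second moment of the weights `z` on the points of `U`. -/
def secondMoment (U : Finset E) (z : E → ℝ) : ℝ :=
  ∑ u ∈ U, z u * ‖u‖ ^ 2

/-- The numbers `1 - ‖s - t‖ ^ 2` for `s ∈ B` and `t ∈ C`: a block of the matrix of all such numbers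
over `B ∪ C`, which is the identity on a unit clique. -/
def distDefect (B C : Finset E) : Matrix B C ℝ :=
  .of fun s t ↦ 1 - ‖(s : E) - t‖ ^ 2

theorem transpose_distDefect (B C : Finset E) : (distDefect B C)ᵀ = distDefect C B := by
  ext t s
  simp [distDefect, norm_sub_rev]

theorem distDefect_nonneg {B C : Finset E} (h : ∀ s ∈ B, ∀ t ∈ C, ‖s - t‖ ≤ 1) (s : B) (t : C) :
    0 ≤ distDefect B C s t :=
  sub_nonneg.2 (pow_le_one₀ (norm_nonneg _) (h s s.2 t t.2))

theorem distDefect_lt_one {B C : Finset E} (h : Disjoint B C) (s : B) (t : C) :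
    distDefect B C s t < 1 :=
  sub_lt_self _ (pow_pos (norm_sub_pos_iff.2 (disjoint_iff_ne.1 h s s.2 t t.2)) 2)

theorem IsUnitClique.sum_mul_one_sub_sq {K : Finset E} (hK : IsUnitClique K) (z : E → ℝ) {v : E}
    (hv : v ∈ K) : ∑ u ∈ K, z u * (1 - ‖v - u‖ ^ 2) = z v := by
  rw [sum_eq_single_of_mem v hv fun u hu huv ↦ by simp [hK v hv u hu huv.symm]]
  simp

variable [InnerProductSpace ℝ E]

namespace IsAffineRelation

variable {U K₁ K₂ : Finset E} {z : E → ℝ}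

theorem sum_mul_one_sub_sq (h : IsAffineRelation U z) (v : E) :
    ∑ u ∈ U, z u * (1 - ‖v - u‖ ^ 2) = -secondMoment U z := by
  have hinner : ∑ u ∈ U, z u * inner ℝ v u = 0 := by
    simpa only [inner_sum, inner_smul_right, inner_zero_right] using
      congrArg (inner ℝ v) h.sum_smul_eq_zero
  calc ∑ u ∈ U, z u * (1 - ‖v - u‖ ^ 2)
      = ∑ u ∈ U, (z u * (1 - ‖v‖ ^ 2) + 2 * (z u * inner ℝ v u) - z u * ‖u‖ ^ 2) :=
        sum_congr rfl fun u _ ↦ by rw [norm_sub_sq_real]; ring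
    _ = -secondMoment U z := by
        rw [sum_sub_distrib, sum_add_distrib, ← sum_mul, ← mul_sum, h.sum_eq_zero, hinner,
          secondMoment]
        ring

variable [DecidableEq E]

theorem apply_add_sum_sdiff (h : IsAffineRelation (K₁ ∪ K₂) z) (hK₁ : IsUnitClique K₁) {v : E}
    (hv : v ∈ K₁) :
    z v + ∑ t ∈ K₂ \ K₁, z t * (1 - ‖v - t‖ ^ 2) = -secondMoment (K₁ ∪ K₂) z := by
  rw [← h.sum_mul_one_sub_sq v, ← union_sdiff_self_eq_union, sum_union disjoint_sdiff,
    hK₁.sum_mul_one_sub_sq z hv]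

theorem apply_add_mulVec (h : IsAffineRelation (K₁ ∪ K₂) z) (hK₁ : IsUnitClique K₁)
    (s : ↥(K₁ \ K₂)) :
    z s + (distDefect (K₁ \ K₂) (K₂ \ K₁) *ᵥ fun t ↦ z t) s = -secondMoment (K₁ ∪ K₂) z := by
  rw [← h.apply_add_sum_sdiff hK₁ (mem_sdiff.1 s.2).1, ← sum_coe_sort]
  simp only [mulVec, dotProduct, distDefect, of_apply, mul_comm]

theorem apply_of_mem_inter (h : IsAffineRelation (K₁ ∪ K₂) z) (hK₁ : IsUnitClique K₁)
    (hK₂ : IsUnitClique K₂) {v : E} (hv : v ∈ K₁ ∩ K₂) : z v = -secondMoment (K₁ ∪ K₂) z := by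
  obtain ⟨hv₁, hv₂⟩ := mem_inter.1 hv
  rw [← h.apply_add_sum_sdiff hK₁ hv₁, Finset.sum_eq_zero, add_zero]
  intro t ht
  obtain ⟨ht₂, ht₁⟩ := mem_sdiff.1 ht
  simp [hK₂ v hv₂ t ht₂ fun hvt ↦ ht₁ (hvt ▸ hv₁)]

theorem swap (h : IsAffineRelation (K₁ ∪ K₂) z) : IsAffineRelation (K₂ ∪ K₁) z := by
  rwa [union_comm]

theorem unitBlock_mulVec (h : IsAffineRelation (K₁ ∪ K₂) z) (hK₁ : IsUnitClique K₁)
    (hK₂ : IsUnitClique K₂) :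
    unitBlock (distDefect (K₁ \ K₂) (K₂ \ K₁)) *ᵥ Sum.elim (fun s ↦ z s) (fun t ↦ z t) =
      fun _ ↦ -secondMoment (K₁ ∪ K₂) z := by
  rw [unitBlock_mulVec_sumElim, transpose_distDefect]
  ext (s | t)
  · exact h.apply_add_mulVec hK₁ s
  · rw [union_comm]
    exact h.swap.apply_add_mulVec hK₂ t

theorem sum_sdiff_add_sum_sdiff (h : IsAffineRelation (K₁ ∪ K₂) z) (hK₁ : IsUnitClique K₁)
    (hK₂ : IsUnitClique K₂) :
    ∑ s : ↥(K₁ \ K₂), z s + ∑ t : ↥(K₂ \ K₁), z t =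
      #(K₁ ∩ K₂) * secondMoment (K₁ ∪ K₂) z := by
  have hinter : ∑ u ∈ K₁ ∩ K₂, z u = -(#(K₁ ∩ K₂) * secondMoment (K₁ ∪ K₂) z) := by
    rw [sum_congr rfl fun u ↦ h.apply_of_mem_inter hK₁ hK₂, sum_const, nsmul_eq_mul, mul_neg]
  have htotal := h.sum_eq_zero
  rw [← union_sdiff_self_eq_union, sum_union disjoint_sdiff, ← sum_inter_add_sum_sdiff K₁ K₂,
    hinter] at htotal
  rw [sum_coe_sort (K₁ \ K₂) z, sum_coe_sort (K₂ \ K₁) z]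
  linarith

theorem isBalancedPair (h : IsAffineRelation (K₁ ∪ K₂) z) (hK₁ : IsUnitClique K₁)
    (hK₂ : IsUnitClique K₂) (hc : secondMoment (K₁ ∪ K₂) z = 0) :
    IsBalancedPair (distDefect (K₁ \ K₂) (K₂ \ K₁)) (fun s ↦ z s)
      (-fun t : ↥(K₂ \ K₁) ↦ z t) where
  mulVec_eq := by
    ext s
    have := h.apply_add_mulVec hK₁ s
    rw [mulVec_neg, Pi.neg_apply]
    linarith
  transpose_mulVec_eq := by
    ext t
    have := h.swap.apply_add_mulVec hK₂ t
    rw [union_comm] at this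
    rw [transpose_distDefect, Pi.neg_apply]
    linarith
  sum_eq_sum := by
    have := h.sum_sdiff_add_sum_sdiff hK₁ hK₂
    rw [hc, mul_zero] at this
    simp only [Pi.neg_apply, sum_neg_distrib]
    linarith

theorem eq_zero_of_sdiff (h : IsAffineRelation (K₁ ∪ K₂) z) (hK₁ : IsUnitClique K₁)
    (hK₂ : IsUnitClique K₂) (hc : secondMoment (K₁ ∪ K₂) z = 0)
    (hz : (fun s : ↥(K₁ \ K₂) ↦ z s) = 0) {u : E} (hu : u ∈ K₁ ∪ K₂) : z u = 0 := by
  by_cases hu₁ : u ∈ K₁ <;> by_cases hu₂ : u ∈ K₂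
  · rw [h.apply_of_mem_inter hK₁ hK₂ (mem_inter.2 ⟨hu₁, hu₂⟩), hc, neg_zero]
  · exact congrFun hz ⟨u, mem_sdiff.2 ⟨hu₁, hu₂⟩⟩
  · have hq : (-fun t : ↥(K₂ \ K₁) ↦ z t) = 0 := by
      rw [← (h.isBalancedPair hK₁ hK₂ hc).transpose_mulVec_eq, hz, mulVec_zero]
    exact neg_eq_zero.1 (congrFun hq ⟨u, mem_sdiff.2 ⟨hu₂, hu₁⟩⟩)
  · exact absurd hu (by simp [hu₁, hu₂])

theorem secondMoment_eq_zero_of_posSemidef (h : IsAffineRelation (K₁ ∪ K₂) z)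
    (hK₁ : IsUnitClique K₁) (hK₂ : IsUnitClique K₂) (hne : (K₁ \ K₂).Nonempty)
    (hpsd : (unitBlock (distDefect (K₁ \ K₂) (K₂ \ K₁))).PosSemidef) :
    secondMoment (K₁ ∪ K₂) z = 0 := by
  set M := unitBlock (distDefect (K₁ \ K₂) (K₂ \ K₁))
  set c := secondMoment (K₁ ∪ K₂) z
  let p : ↥(K₁ \ K₂) ⊕ ↥(K₂ \ K₁) → ℝ := Sum.elim (fun s ↦ z s) (fun t ↦ z t)
  have hMp : M *ᵥ p = fun _ ↦ -c := h.unitBlock_mulVec hK₁ hK₂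
  have hform : star p ⬝ᵥ M *ᵥ p = -(#(K₁ ∩ K₂) * c ^ 2) := by
    rw [star_trivial, hMp, dotProduct, ← sum_mul, Fintype.sum_sum_type]
    simp only [p, Sum.elim_inl, Sum.elim_inr, h.sum_sdiff_add_sum_sdiff hK₁ hK₂]
    ring
  have hzero : star p ⬝ᵥ M *ᵥ p = 0 :=
    (hform.trans_le (neg_nonpos.2 (by positivity))).antisymm (hpsd.dotProduct_mulVec_nonneg p)
  have hkernel := hMp.symm.trans ((hpsd.dotProduct_mulVec_zero_iff p).1 hzero)
  obtain ⟨s, hs⟩ := hne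
  exact neg_eq_zero.1 (congrFun hkernel (.inl ⟨s, hs⟩))

end IsAffineRelation

theorem card_union_le_finrank_add_two_of_isUnitClique [FiniteDimensional ℝ E] [DecidableEq E]
    {K₁ K₂ : Finset E} (hK₁ : IsUnitClique K₁) (hK₂ : IsUnitClique K₂)
    (hdiam : ∀ s ∈ K₁, ∀ t ∈ K₂, ‖s - t‖ ≤ 1) (hcard₁ : #(K₁ \ K₂) ≤ 3)
    (hcard₂ : #(K₂ \ K₁) ≤ 3) : #(K₁ ∪ K₂) ≤ finrank ℝ E + 2 := by
  by_contra! hU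
  have hN := distDefect_nonneg (B := K₁ \ K₂) (C := K₂ \ K₁) fun s hs t ht ↦
    hdiam s (mem_sdiff.1 hs).1 t (mem_sdiff.1 ht).1
  have hN1 := distDefect_lt_one (disjoint_sdiff_sdiff : Disjoint (K₁ \ K₂) (K₂ \ K₁))
  rw [← Fintype.card_coe] at hcard₁ hcard₂
  obtain ⟨z, hz, hz_moment, u, hu, hzu⟩ :=
    exists_isAffineRelation_sum_mul_eq_zero hU fun u ↦ ‖u‖ ^ 2
  have hz0 : (fun s : ↥(K₁ \ K₂) ↦ z s) ≠ 0 := fun h0 ↦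
    hzu (hz.eq_zero_of_sdiff hK₁ hK₂ hz_moment h0 hu)
  have hpsd := (hz.isBalancedPair hK₁ hK₂ hz_moment).posSemidef hN hN1 hcard₁ hcard₂ hz0
  obtain ⟨w, hw, hw_sum, u', hu', hwu'⟩ :=
    exists_isAffineRelation_sum_mul_eq_zero hU fun u ↦ if u ∈ K₁ \ K₂ then 1 else 0
  have hne : (K₁ \ K₂).Nonempty := by
    obtain ⟨s, -⟩ := Function.ne_iff.1 hz0
    exact ⟨s, s.2⟩
  have hw_moment := hw.secondMoment_eq_zero_of_posSemidef hK₁ hK₂ hne hpsd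
  have hw_sum' : ∑ s : ↥(K₁ \ K₂), w s = 0 := by
    simp only [mul_ite, mul_one, mul_zero, sum_ite_mem] at hw_sum
    rwa [inter_eq_right.2 (sdiff_subset.trans subset_union_left), ← sum_coe_sort] at hw_sum
  have hw0 := (hw.isBalancedPair hK₁ hK₂ hw_moment).eq_zero_of_sum_eq_zero hN hN1 hcard₁ hcard₂
    hw_sum'
  exact hwu' (hw.eq_zero_of_sdiff hK₁ hK₂ hw_moment hw0 hu')

theorem no_two_cliques_sharing_d_sub_three_general [FiniteDimensional ℝ E] [DecidableEq E] {d : ℕ}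
    (hE : finrank ℝ E = d) (hd : 3 ≤ d) {X : Set E} (hdiam : ∀ x ∈ X, ∀ y ∈ X, ‖x - y‖ ≤ 1) :
    ¬ ∃ K₁ K₂ : Finset E, (K₁ : Set E) ⊆ X ∧ (K₂ : Set E) ⊆ X ∧ #K₁ = d ∧ #K₂ = d ∧
      IsUnitClique K₁ ∧ IsUnitClique K₂ ∧ #(K₁ ∩ K₂) = d - 3 := by
  rintro ⟨K₁, K₂, hX₁, hX₂, hd₁, hd₂, hK₁, hK₂, hinter⟩
  have hcard₁ := card_sdiff_add_card_inter K₁ K₂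
  have hcard₂ := card_sdiff_add_card_inter K₂ K₁
  rw [inter_comm] at hcard₂
  have hunion := card_union_add_card_inter K₁ K₂
  have hle := card_union_le_finrank_add_two_of_isUnitClique hK₁ hK₂
    (fun s hs t ht ↦ hdiam s (hX₁ hs) t (hX₂ ht)) (by omega) (by omega)
  omega

end Geometry

theorem no_two_cliques_sharing_d_sub_three (d : ℕ) (hd : d ≥ 4)
    (X : Finset (EuclideanSpace ℝ (Fin d)))
    (hdiam : ∀ x ∈ X, ∀ y ∈ X, ‖x - y‖ ≤ 1) :
    ¬ ∃ K₁ K₂ : Finset (EuclideanSpace ℝ (Fin d)),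
      K₁ ⊆ X ∧ K₂ ⊆ X ∧ K₁.card = d ∧ K₂.card = d ∧
      (∀ x ∈ K₁, ∀ y ∈ K₁, x ≠ y → ‖x - y‖ = 1) ∧
      (∀ x ∈ K₂, ∀ y ∈ K₂, x ≠ y → ‖x - y‖ = 1) ∧
      (K₁ ∩ K₂).card = d - 3 :=
  no_two_cliques_sharing_d_sub_three_general (X := X) finrank_euclideanSpace_fin
    (Nat.le_of_succ_le hd) hdiam
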